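/- For every τ in the complex upper half-plane, (1 + c(τ)³)·c(−1/(6τ))³ = 1/8 − c(τ)³; equivalently c(−1/(6τ))³ = (1/8 − c(τ)³)/(1 + c(τ)³). -/

import Mathlib

open Complex

/-- The nome `q = exp(2πiτ)`. -/
noncomputable def nome (τ : ℂ) : ℂ := Complex.exp (2 * Real.pi * I * τ)

/-- Ramanujan's cubic continued fraction, as an infinite product:
`c(τ) = q^{1/3} ∏_{n≥1} (1-q^{6n-1})(1-q^{6n-5})/(1-q^{6n-3})²`. -/
noncomputable def c (τ : ℂ) : ℂ :=
  Complex.exp (2 * Real.pi * I * τ / 3) *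
    ∏' n : ℕ,
      ((1 - nome τ ^ (6 * (n + 1) - 1)) * (1 - nome τ ^ (6 * (n + 1) - 5)) /
        (1 - nome τ ^ (6 * (n + 1) - 3)) ^ 2)

/-- The infinite `q`-Pochhammer symbol `(x; Q)_∞ = ∏_{n ≥ 0} (1 - x Q ^ n)`. -/
noncomputable def qPochInf (x Q : ℂ) : ℂ := ∏' n : ℕ, (1 - x * Q ^ n)

section qPochInf

variable {Q : ℂ}

lemma summable_norm_neg_mul_pow (hQ : ‖Q‖ < 1) (x : ℂ) : Summable fun n : ℕ ↦ ‖-(x * Q ^ n)‖ := by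
  simpa using (summable_geometric_of_lt_one (norm_nonneg _) hQ).mul_left ‖x‖

lemma hasProd_qPochInf (hQ : ‖Q‖ < 1) (x : ℂ) :
    HasProd (fun n : ℕ ↦ 1 - x * Q ^ n) (qPochInf x Q) := by
  have h := multipliable_one_add_of_summable (summable_norm_neg_mul_pow hQ x)
  simp only [← sub_eq_add_neg] at h
  exact h.hasProd

lemma qPochInf_ne_zero (hQ : ‖Q‖ < 1) {x : ℂ} (hx : ‖x‖ < 1) : qPochInf x Q ≠ 0 := by
  have h := tprod_one_add_ne_zero_of_summable (f := fun n : ℕ ↦ -(x * Q ^ n)) (fun n h ↦ ?_)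
    (summable_norm_neg_mul_pow hQ x)
  · simpa only [← sub_eq_add_neg] using! h
  · have h1 : ‖x * Q ^ n‖ = 1 := by
      rw [← sub_eq_add_neg, sub_eq_zero] at h
      rw [← h, norm_one]
    rw [norm_mul, norm_pow] at h1
    have : ‖Q‖ ^ n ≤ 1 := pow_le_one₀ (norm_nonneg _) hQ.le
    nlinarith [norm_nonneg x]

lemma qPochInf_eq_one_sub_mul (hQ : ‖Q‖ < 1) (x : ℂ) :
    qPochInf x Q = (1 - x) * qPochInf (x * Q) Q := by
  have h := (hasProd_qPochInf hQ x).tendsto_prod_nat.comp (Filter.tendsto_add_atTop_nat 1)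
  refine tendsto_nhds_unique h ?_
  refine ((hasProd_qPochInf hQ (x * Q)).tendsto_prod_nat.const_mul (1 - x)).congr fun n ↦ ?_
  simp [Finset.prod_range_succ', mul_comm, pow_succ', mul_assoc, mul_left_comm]

lemma qPochInf_mul_neg (hQ : ‖Q‖ < 1) (x : ℂ) :
    qPochInf x Q * qPochInf (-x) Q = qPochInf (x ^ 2) (Q ^ 2) := by
  refine ((hasProd_qPochInf hQ x).mul (hasProd_qPochInf hQ (-x))).unique ?_
  convert hasProd_qPochInf (Q := Q ^ 2) (by simpa using pow_lt_one₀ (norm_nonneg Q) hQ two_ne_zero)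
    (x ^ 2) using 2 with n
  ring

lemma qPochInf_mul_mul_of_root (hQ : ‖Q‖ < 1) (x : ℂ) {ω : ℂ} (hω : 1 + ω + ω ^ 2 = 0) :
    qPochInf x Q * qPochInf (ω * x) Q * qPochInf (ω ^ 2 * x) Q = qPochInf (x ^ 3) (Q ^ 3) := by
  refine (((hasProd_qPochInf hQ x).mul (hasProd_qPochInf hQ (ω * x))).mul
    (hasProd_qPochInf hQ (ω ^ 2 * x))).unique ?_
  convert hasProd_qPochInf (Q := Q ^ 3)
    (by simpa using pow_lt_one₀ (norm_nonneg Q) hQ three_ne_zero) (x ^ 3) using 2 with n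
  linear_combination (-(x * Q ^ n) + ω * (x * Q ^ n) ^ 2 - (ω - 1) * (x * Q ^ n) ^ 3) * hω

lemma qPochInf_eq_prod (hQ : ‖Q‖ < 1) (x : ℂ) {m : ℕ} (hm : m ≠ 0) :
    qPochInf x Q = ∏ i ∈ Finset.range m, qPochInf (x * Q ^ i) (Q ^ m) := by
  have hQm : ‖Q ^ m‖ < 1 := by simpa using pow_lt_one₀ (norm_nonneg Q) hQ hm
  have h1 := (hasProd_qPochInf hQ x).tendsto_prod_nat.comp
    (Filter.tendsto_id.nsmul_atTop (Nat.pos_of_ne_zero hm))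
  refine tendsto_nhds_unique h1 ?_
  have h2 := tendsto_finsetProd (Finset.range m)
    (fun i _ ↦ (hasProd_qPochInf hQm (x * Q ^ i)).tendsto_prod_nat)
  refine h2.congr fun n ↦ ?_
  simp only [Function.comp_apply, id, smul_eq_mul]
  induction n with
  | zero => simp
  | succ n ih =>
    rw [mul_add, mul_one, Finset.prod_range_add, ← ih, ← Finset.prod_mul_distrib]
    refine Finset.prod_congr rfl fun i _ ↦ ?_
    rw [Finset.prod_range_succ]
    ring

end qPochInf

noncomputable def invQFact (Q : ℂ) (k : ℤ) : ℂ :=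
  if k < 0 then 0 else (∏ i ∈ Finset.range k.toNat, (1 - Q * Q ^ i))⁻¹

section JTP
variable {Q : ℂ}

lemma one_sub_mul_pow_ne_zero (hQ : ‖Q‖ < 1) (i : ℕ) : 1 - Q * Q ^ i ≠ 0 := by
  intro h
  have : ‖Q ^ (i + 1)‖ < 1 := by simpa using pow_lt_one₀ (norm_nonneg Q) hQ i.succ_ne_zero
  rw [pow_succ', ← sub_eq_zero.mp h, norm_one] at this
  exact lt_irrefl _ this

lemma invQFact_sub_one (hQ : ‖Q‖ < 1) (k : ℤ) :
    invQFact Q (k - 1) = (1 - Q ^ k) * invQFact Q k := by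
  rcases lt_trichotomy k 0 with h | rfl | h
  · simp [invQFact, h, show k < 1 by lia]
  · simp [invQFact]
  · obtain ⟨n, rfl⟩ : ∃ n : ℕ, k = n + 1 := ⟨(k - 1).toNat, by lia⟩
    have := one_sub_mul_pow_ne_zero hQ n
    have h2 : ¬ ((n : ℤ) + 1 < 0) := by lia
    have h3 : ((n : ℤ) + 1).toNat = n + 1 := by lia
    simp only [invQFact, add_sub_cancel_right, h2, h3, Int.natCast_nonneg, not_lt.mpr, if_false,
      Int.toNat_natCast, Finset.prod_range_succ, mul_inv]
    rw [show Q ^ ((n : ℤ) + 1) = Q * Q ^ n by rw [← pow_succ']; norm_cast]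
    field_simp

lemma tendsto_prod_range_one_sub (hQ : ‖Q‖ < 1) :
    Filter.Tendsto (fun n ↦ ∏ i ∈ Finset.range n, (1 - Q * Q ^ i)) Filter.atTop
      (nhds (qPochInf Q Q)) := (hasProd_qPochInf hQ Q).tendsto_prod_nat

lemma tendsto_invQFact (hQ : ‖Q‖ < 1) :
    Filter.Tendsto (invQFact Q) Filter.atTop (nhds (qPochInf Q Q)⁻¹) := by
  have h := ((tendsto_prod_range_one_sub hQ).inv₀ (qPochInf_ne_zero hQ hQ)).comp
    (show Filter.Tendsto Int.toNat Filter.atTop Filter.atTop from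
      Filter.tendsto_atTop_atTop.2 fun n ↦ ⟨n, fun k hk ↦ by lia⟩)
  refine h.congr' ?_
  filter_upwards [Filter.eventually_ge_atTop 0] with k hk
  simp [invQFact, not_lt.mpr hk]

lemma exists_norm_invQFact_le (hQ : ‖Q‖ < 1) : ∃ C, ∀ k, ‖invQFact Q k‖ ≤ C := by
  obtain ⟨C, hC⟩ := (Metric.isBounded_range_of_tendsto _ ((tendsto_prod_range_one_sub hQ).inv₀
    (qPochInf_ne_zero hQ hQ))).exists_norm_le
  refine ⟨C, fun k ↦ ?_⟩
  unfold invQFact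
  split_ifs
  · simpa using (norm_nonneg _).trans (hC _ ⟨0, rfl⟩)
  · exact hC _ ⟨_, rfl⟩

lemma invQFact_mul_recurrence (hQ : ‖Q‖ < 1) (hQ0 : Q ≠ 0) (n : ℕ) (m : ℤ) :
    (1 - Q * Q ^ (2 * n)) * (1 - Q * Q ^ (2 * n + 1)) *
        (invQFact Q (n + 1 + m) * invQFact Q (n + 1 - m)) =
      (1 + Q * Q ^ (2 * n)) * (invQFact Q (n + m) * invQFact Q (n - m)) +
      Q * Q ^ n * Q ^ (-m) * (invQFact Q (n + (m - 1)) * invQFact Q (n - (m - 1))) +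
      Q * Q ^ n * Q ^ m * (invQFact Q (n + (m + 1)) * invQFact Q (n - (m + 1))) := by
  have a1 := invQFact_sub_one hQ (n + 1 + m)
  have a2 := invQFact_sub_one hQ (n + m)
  have b1 := invQFact_sub_one hQ (n + 1 - m)
  have b2 := invQFact_sub_one hQ (n - m)
  rw [show (n + 1 + m - 1 : ℤ) = n + m by ring] at a1
  rw [show (n + 1 - m - 1 : ℤ) = n - m by ring] at b1
  rw [show (n + (m - 1) : ℤ) = n + m - 1 by ring, show (n - (m + 1) : ℤ) = n - m - 1 by ring,
    show (n - (m - 1) : ℤ) = n + 1 - m by ring, show (n + (m + 1) : ℤ) = n + 1 + m by ring,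
    a2, b2, a1, b1]
  simp only [zpow_sub₀ hQ0, zpow_add₀ hQ0, zpow_natCast, zpow_one, zpow_neg]
  have := zpow_ne_zero m hQ0
  field_simp
  ring


lemma norm_cexp_two_pi_lt_one {τ : ℂ} (hτ : 0 < τ.im) : ‖cexp (2 * Real.pi * I * τ)‖ < 1 := by
  rw [Complex.norm_exp, Real.exp_lt_one_iff]
  have : (2 * Real.pi * I * τ).re = -(2 * Real.pi * τ.im) := by simp
  rw [this]
  have := Real.pi_pos
  nlinarith [mul_pos this hτ]

/-- The partial products in the Jacobi triple product expand as truncated theta series. -/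
lemma hasSum_finite_tripleProduct (z : ℂ) {τ : ℂ} (hτ : 0 < τ.im) {Q x : ℂ}
    (hQ : Q = cexp (2 * Real.pi * I * τ)) (hx : x = cexp (2 * Real.pi * I * z)) (n : ℕ) :
    HasSum (fun m : ℤ ↦ (∏ i ∈ Finset.range (2 * n), (1 - Q * Q ^ i)) *
        (invQFact Q (n + m) * invQFact Q (n - m)) * jacobiTheta₂_term m (z - τ / 2) τ)
      (∏ i ∈ Finset.range n, (1 + x * Q ^ i) * (1 + Q * x⁻¹ * Q ^ i)) := by
  have hQ1 : ‖Q‖ < 1 := hQ ▸ norm_cexp_two_pi_lt_one hτ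
  have hQ0 : Q ≠ 0 := hQ ▸ Complex.exp_ne_zero _
  have hx0 : x ≠ 0 := hx ▸ Complex.exp_ne_zero _
  induction n with
  | zero =>
    have h := hasSum_single (f := fun m : ℤ ↦ (∏ i ∈ Finset.range (2 * 0), (1 - Q * Q ^ i)) *
        (invQFact Q ((0 : ℕ) + m) * invQFact Q ((0 : ℕ) - m)) *
          jacobiTheta₂_term m (z - τ / 2) τ) 0 fun m hm ↦ ?_
    · convert h using 1
      simp [invQFact, jacobiTheta₂_term]
    · rcases lt_or_gt_of_ne hm with h | h
      · simp [invQFact, h]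
      · simp [invQFact, h]
  | succ n ih =>
    have hl := ((Equiv.addRight (-1 : ℤ)).hasSum_iff.mpr ih).mul_left (x * Q ^ n)
    have hr := ((Equiv.addRight (1 : ℤ)).hasSum_iff.mpr ih).mul_left (Q * x⁻¹ * Q ^ n)
    have h := ((ih.mul_left (1 + Q * Q ^ (2 * n))).add hl).add hr
    have hp : ∏ i ∈ Finset.range (n + 1), (1 + x * Q ^ i) * (1 + Q * x⁻¹ * Q ^ i) =
        (1 + Q * Q ^ (2 * n)) * ∏ i ∈ Finset.range n, (1 + x * Q ^ i) * (1 + Q * x⁻¹ * Q ^ i) +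
        x * Q ^ n * ∏ i ∈ Finset.range n, (1 + x * Q ^ i) * (1 + Q * x⁻¹ * Q ^ i) +
        Q * x⁻¹ * Q ^ n * ∏ i ∈ Finset.range n, (1 + x * Q ^ i) * (1 + Q * x⁻¹ * Q ^ i) := by
      rw [Finset.prod_range_succ]
      linear_combination (Q * Q ^ (2 * n) *
        ∏ i ∈ Finset.range n, (1 + x * Q ^ i) * (1 + Q * x⁻¹ * Q ^ i)) * mul_inv_cancel₀ hx0
    rw [hp]
    refine h.congr_fun fun m ↦ ?_
    have t1 : jacobiTheta₂_term (m + -1) (z - τ / 2) τ =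
        Q * Q ^ (-m) * x⁻¹ * jacobiTheta₂_term m (z - τ / 2) τ := by
      simp only [hQ, hx, jacobiTheta₂_term, ← Complex.exp_int_mul, ← Complex.exp_neg,
        ← Complex.exp_add]
      congr 1
      push_cast
      ring
    have t2 : jacobiTheta₂_term (m + 1) (z - τ / 2) τ =
        Q ^ m * x * jacobiTheta₂_term m (z - τ / 2) τ := by
      simp only [hQ, hx, jacobiTheta₂_term, ← Complex.exp_int_mul,
        ← Complex.exp_add]
      congr 1
      push_cast
      ring
    have key := invQFact_mul_recurrence hQ1 hQ0 n m
    simp only [Function.comp_apply, Equiv.coe_addRight, t1, t2, Finset.prod_range_succ,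
      show 2 * (n + 1) = 2 * n + 1 + 1 by ring]
    simp only [← sub_eq_add_neg, Nat.cast_add, Nat.cast_one]
    linear_combination (∏ i ∈ Finset.range (2 * n), (1 - Q * Q ^ i)) *
      jacobiTheta₂_term m (z - τ / 2) τ * (key - Q * Q ^ n *
      (Q ^ (-m) * (invQFact Q (n + (m - 1)) * invQFact Q (n - (m - 1))) +
      Q ^ m * (invQFact Q (n + (m + 1)) * invQFact Q (n - (m + 1)))) * mul_inv_cancel₀ hx0)

/-- **Jacobi triple product identity**, for the two-variable Jacobi theta function. -/
theorem jacobiTheta₂_eq_qPochInf (z : ℂ) {τ : ℂ} (hτ : 0 < τ.im) {Q x : ℂ}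
    (hQ : Q = cexp (2 * Real.pi * I * τ)) (hx : x = cexp (2 * Real.pi * I * z)) :
    jacobiTheta₂ (z - τ / 2) τ =
      qPochInf Q Q * (qPochInf (-x) Q * qPochInf (-(Q * x⁻¹)) Q) := by
  have hQ1 : ‖Q‖ < 1 := hQ ▸ norm_cexp_two_pi_lt_one hτ
  have hE := qPochInf_ne_zero hQ1 hQ1
  obtain ⟨C, hC⟩ := exists_norm_invQFact_le hQ1
  obtain ⟨D, hD⟩ := (Metric.isBounded_range_of_tendsto _
    (tendsto_prod_range_one_sub hQ1)).exists_norm_le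
  have hprod := (((hasProd_qPochInf hQ1 (-x)).mul
    (hasProd_qPochInf hQ1 (-(Q * x⁻¹)))).tendsto_prod_nat)
  have hC0 : 0 ≤ C := (norm_nonneg _).trans (hC 0)
  have hD0 : 0 ≤ D := (norm_nonneg _).trans (hD _ ⟨0, rfl⟩)
  have hsum := tendsto_tsum_of_dominated_convergence (𝓕 := Filter.atTop)
    (f := fun (n : ℕ) (m : ℤ) ↦ (∏ i ∈ Finset.range (2 * n), (1 - Q * Q ^ i)) *
        (invQFact Q (n + m) * invQFact Q (n - m)) * jacobiTheta₂_term m (z - τ / 2) τ)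
    (g := fun m ↦ (qPochInf Q Q)⁻¹ * jacobiTheta₂_term m (z - τ / 2) τ)
    (bound := fun m ↦ D * (C * C) * ‖jacobiTheta₂_term m (z - τ / 2) τ‖) ?_ ?_ ?_
  · rw [tsum_mul_left] at hsum
    have heq := tendsto_nhds_unique hprod (hsum.congr fun n ↦ ?_)
    · rw [heq, jacobiTheta₂, mul_inv_cancel_left₀ hE]
    · rw [(hasSum_finite_tripleProduct z hτ hQ hx n).tsum_eq]
      simp
  · exact ((summable_jacobiTheta₂_term_iff _ _).mpr hτ).norm.mul_left _
  · intro m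
    refine Filter.Tendsto.mul_const _ ?_
    have h1 := (tendsto_prod_range_one_sub hQ1).comp
      (Filter.tendsto_id.const_mul_atTop' (r := 2) two_pos)
    have h2 := (tendsto_invQFact hQ1).comp
      (Filter.tendsto_atTop_add_const_right _ m (tendsto_natCast_atTop_atTop (R := ℤ)))
    have h3 := (tendsto_invQFact hQ1).comp
      (Filter.tendsto_atTop_add_const_right _ (-m) (tendsto_natCast_atTop_atTop (R := ℤ)))
    have h4 := h1.mul (h2.mul h3)
    rw [mul_inv_cancel_left₀ hE] at h4
    exact h4
  · refine .of_forall fun n m ↦ ?_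
    rw [norm_mul, norm_mul, norm_mul]
    gcongr
    · exact hD _ ⟨_, rfl⟩
    · exact hC _
    · exact hC _

end JTP

lemma jacobiTheta₂_trisection (z : ℂ) {τ : ℂ} (hτ : 0 < τ.im) :
    jacobiTheta₂ z τ = jacobiTheta₂ (3 * z) (9 * τ) +
      cexp (2 * Real.pi * I * z + Real.pi * I * τ) * jacobiTheta₂ (3 * z + 3 * τ) (9 * τ) +
      cexp (4 * Real.pi * I * z + 4 * Real.pi * I * τ) *
        jacobiTheta₂ (3 * z + 6 * τ) (9 * τ) := by
  let e : Fin 3 × ℤ ≃ ℤ := (Equiv.prodComm _ _).trans (Int.divModEquiv 3).symm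
  have hs := (summable_jacobiTheta₂_term_iff z τ).mpr hτ
  have h1 : jacobiTheta₂ z τ = ∑' p : Fin 3 × ℤ, jacobiTheta₂_term (e p) z τ :=
    (e.tsum_eq _).symm
  have he (j : Fin 3) (m : ℤ) : e (j, m) = m * 3 + (j : ℕ) := by
    simp [e, Int.divModEquiv]
  rw [h1, Summable.tsum_prod (f := fun p ↦ jacobiTheta₂_term (e p) z τ) (e.summable_iff.mpr hs),
    tsum_fintype, Fin.sum_univ_three]
  simp only [jacobiTheta₂, ← tsum_mul_left]
  refine congrArg₂ _ (congrArg₂ _ ?_ ?_) ?_ <;> refine tsum_congr fun m ↦ ?_ <;>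
    simp only [he, jacobiTheta₂_term, ← Complex.exp_add] <;> congr 1 <;>
    push_cast <;> simp <;> ring

section Evaluation

variable {s r : ℂ}

lemma pow_eq_cexp (hr : r = cexp (2 * Real.pi * I * s)) (n : ℕ) :
    r ^ n = cexp (2 * Real.pi * I * (n * s)) := by
  rw [hr, ← Complex.exp_nat_mul]
  ring_nf

lemma natCast_mul_im_pos (hs : 0 < s.im) {n : ℕ} (hn : n ≠ 0) : 0 < ((n : ℂ) * s).im := by
  simpa using mul_pos (Nat.cast_pos.mpr (Nat.pos_of_ne_zero hn)) hs

lemma norm_pow_lt_one {Q : ℂ} (hQ : ‖Q‖ < 1) {n : ℕ} (hn : n ≠ 0) : ‖Q ^ n‖ < 1 := by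
  simpa using pow_lt_one₀ (norm_nonneg Q) hQ hn

lemma qPochInf_pow_self_ne_zero (hr : ‖r‖ < 1) {n : ℕ} (hn : n ≠ 0) :
    qPochInf (r ^ n) (r ^ n) ≠ 0 :=
  qPochInf_ne_zero (norm_pow_lt_one hr hn) (norm_pow_lt_one hr hn)

lemma qPochInf_self_eq_prod (hr : ‖r‖ < 1) {m : ℕ} (hm : m ≠ 0) :
    qPochInf r r = ∏ i ∈ Finset.range m, qPochInf (r ^ (i + 1)) (r ^ m) := by
  simpa only [pow_succ'] using qPochInf_eq_prod hr r hm

lemma qPochInf_self_eq_two (hr : ‖r‖ < 1) :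
    qPochInf r r = qPochInf r (r ^ 2) * qPochInf (r ^ 2) (r ^ 2) := by
  simpa [Finset.prod_range_succ] using qPochInf_self_eq_prod hr two_ne_zero

lemma jacobiTheta₂_half (hs : 0 < s.im) (hr : r = cexp (2 * Real.pi * I * s)) :
    jacobiTheta₂ (1 / 2) (2 * s) = qPochInf r r ^ 2 / qPochInf (r ^ 2) (r ^ 2) := by
  have hr1 : ‖r‖ < 1 := hr ▸ norm_cexp_two_pi_lt_one hs
  have hr0 : r ≠ 0 := hr ▸ Complex.exp_ne_zero _
  have hE2 := qPochInf_pow_self_ne_zero hr1 two_ne_zero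
  have h := jacobiTheta₂_eq_qPochInf (1 / 2 + s) (natCast_mul_im_pos hs two_ne_zero)
    (pow_eq_cexp hr 2) (x := -r) (by
      rw [mul_add, Complex.exp_add, ← hr, show 2 * Real.pi * I * (1 / 2) = Real.pi * I by ring,
        Complex.exp_pi_mul_I, neg_one_mul])
  have h1 := qPochInf_self_eq_two hr1
  rw [show -(r ^ 2 * (-r)⁻¹) = r by field_simp, neg_neg] at h
  rw [show (1 / 2 + s - ((2 : ℕ) : ℂ) * s / 2 : ℂ) = 1 / 2 by push_cast; ring] at h
  rw [eq_div_iff hE2, h1]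
  push_cast at h
  rw [h]
  ring

lemma jacobiTheta₂_half_sub (hs : 0 < s.im) (hr : r = cexp (2 * Real.pi * I * s)) :
    jacobiTheta₂ (1 / 2 - 2 * s) (6 * s) =
      qPochInf (r ^ 6) (r ^ 6) * (qPochInf r (r ^ 6) * qPochInf (r ^ 5) (r ^ 6)) := by
  have hr0 : r ≠ 0 := hr ▸ Complex.exp_ne_zero _
  have h := jacobiTheta₂_eq_qPochInf (1 / 2 + s) (natCast_mul_im_pos hs (n := 6) (by simp))
    (pow_eq_cexp hr 6) (x := -r) (by
      rw [mul_add, Complex.exp_add, ← hr, show 2 * Real.pi * I * (1 / 2) = Real.pi * I by ring,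
        Complex.exp_pi_mul_I, neg_one_mul])
  rw [show -(r ^ 6 * (-r)⁻¹) = r ^ 5 by field_simp, neg_neg] at h
  rw [← h]
  congr 1
  push_cast
  ring

lemma qPochInf_self_eq_three (hr : ‖r‖ < 1) :
    qPochInf r r = qPochInf r (r ^ 3) * qPochInf (r ^ 2) (r ^ 3) * qPochInf (r ^ 3) (r ^ 3) := by
  simpa [Finset.prod_range_succ] using qPochInf_self_eq_prod hr three_ne_zero

lemma qPochInf_self_eq_six (hr : ‖r‖ < 1) :
    qPochInf r r = qPochInf r (r ^ 6) * qPochInf (r ^ 2) (r ^ 6) * qPochInf (r ^ 3) (r ^ 6) *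
      qPochInf (r ^ 4) (r ^ 6) * qPochInf (r ^ 5) (r ^ 6) * qPochInf (r ^ 6) (r ^ 6) := by
  simpa [Finset.prod_range_succ] using qPochInf_self_eq_prod hr (m := 6) (by simp)

lemma qPochInf_sq_eq_three (hr : ‖r‖ < 1) :
    qPochInf (r ^ 2) (r ^ 2) =
      qPochInf (r ^ 2) (r ^ 6) * qPochInf (r ^ 4) (r ^ 6) * qPochInf (r ^ 6) (r ^ 6) := by
  simpa [← pow_mul] using qPochInf_self_eq_three (norm_pow_lt_one hr two_ne_zero)

lemma qPochInf_cube_eq_two (hr : ‖r‖ < 1) :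
    qPochInf (r ^ 3) (r ^ 3) = qPochInf (r ^ 3) (r ^ 6) * qPochInf (r ^ 6) (r ^ 6) := by
  simpa [← pow_mul] using qPochInf_self_eq_two (norm_pow_lt_one hr three_ne_zero)

lemma qPochInf_one_mul_five (hr : ‖r‖ < 1) :
    qPochInf r (r ^ 6) * qPochInf (r ^ 5) (r ^ 6) * (qPochInf (r ^ 2) (r ^ 2) *
      qPochInf (r ^ 3) (r ^ 3)) = qPochInf r r * qPochInf (r ^ 6) (r ^ 6) := by
  rw [qPochInf_self_eq_six hr, qPochInf_sq_eq_three hr, qPochInf_cube_eq_two hr]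
  ring

lemma jacobiTheta₂_half_period (hs : 0 < s.im) (hr : r = cexp (2 * Real.pi * I * s)) :
    jacobiTheta₂ (-s / 2) s = 2 * qPochInf (r ^ 2) (r ^ 2) ^ 2 / qPochInf r r := by
  have hr1 : ‖r‖ < 1 := hr ▸ norm_cexp_two_pi_lt_one hs
  have hE := qPochInf_ne_zero hr1 hr1
  have h := jacobiTheta₂_eq_qPochInf 0 hs hr (x := 1) (by simp)
  have h1 := qPochInf_eq_one_sub_mul hr1 (-1)
  rw [show (0 - s / 2 : ℂ) = -s / 2 by ring, h1, inv_one, mul_one, neg_one_mul] at h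
  rw [eq_div_iff hE, h, ← qPochInf_mul_neg hr1 r]
  ring

lemma jacobiTheta₂_neg_half_three (hs : 0 < s.im) (hr : r = cexp (2 * Real.pi * I * s)) :
    jacobiTheta₂ (-s / 2) (3 * s) = qPochInf (r ^ 2) (r ^ 2) * qPochInf (r ^ 3) (r ^ 3) ^ 2 /
      (qPochInf r r * qPochInf (r ^ 6) (r ^ 6)) := by
  have hr0 : r ≠ 0 := hr ▸ Complex.exp_ne_zero _
  have hr1 : ‖r‖ < 1 := hr ▸ norm_cexp_two_pi_lt_one hs
  have hr3 := norm_pow_lt_one hr1 three_ne_zero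
  have hE := qPochInf_ne_zero hr1 hr1
  have hE6 := qPochInf_pow_self_ne_zero hr1 (n := 6) (by simp)
  have h := jacobiTheta₂_eq_qPochInf s (natCast_mul_im_pos hs three_ne_zero)
    (pow_eq_cexp hr 3) hr
  have h1 := qPochInf_mul_neg hr3 r
  have h2 := qPochInf_mul_neg hr3 (r ^ 2)
  simp only [← pow_mul] at h1 h2
  rw [show r ^ 3 * r⁻¹ = r ^ 2 by field_simp] at h
  rw [show (s - ((3 : ℕ) : ℂ) * s / 2 : ℂ) = -s / 2 by push_cast; ring] at h
  push_cast at h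
  rw [eq_div_iff (mul_ne_zero hE hE6), h, qPochInf_self_eq_three hr1, qPochInf_sq_eq_three hr1]
  norm_num at h1 h2
  rw [← h1, ← h2]
  ring

lemma qPochInf_half_trisection (hs : 0 < s.im) (hr : r = cexp (2 * Real.pi * I * s)) :
    qPochInf r r ^ 2 / qPochInf (r ^ 2) (r ^ 2) =
      qPochInf (r ^ 9) (r ^ 9) ^ 2 / qPochInf (r ^ 18) (r ^ 18) -
      2 * r * (qPochInf (r ^ 18) (r ^ 18) *
        (qPochInf (r ^ 3) (r ^ 18) * qPochInf (r ^ 15) (r ^ 18))) := by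
  have h9 := jacobiTheta₂_half (natCast_mul_im_pos hs (n := 9) (by simp)) (pow_eq_cexp hr 9)
  have h3 := jacobiTheta₂_half_sub (natCast_mul_im_pos hs three_ne_zero) (pow_eq_cexp hr 3)
  have ht := jacobiTheta₂_trisection (1 / 2) (natCast_mul_im_pos hs two_ne_zero)
  simp only [← pow_mul] at h9 h3
  norm_num only [Nat.cast_ofNat, ← mul_assoc] at h9 h3 ht
  rw [mul_assoc] at h3
  rw [← jacobiTheta₂_half hs hr, ← h9, ← h3]
  have e0 : jacobiTheta₂ (3 / 2) (18 * s) = jacobiTheta₂ (1 / 2) (18 * s) := by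
    rw [show (3 / 2 : ℂ) = 1 / 2 + 1 by norm_num, jacobiTheta₂_add_left]
  have e1 : jacobiTheta₂ (3 / 2 + 6 * s) (18 * s) = jacobiTheta₂ (1 / 2 - 6 * s) (18 * s) := by
    rw [← jacobiTheta₂_neg_left, ← jacobiTheta₂_add_left, ← jacobiTheta₂_add_left]
    congr 1; ring
  have e2 : jacobiTheta₂ (3 / 2 + 12 * s) (18 * s) = cexp (-Real.pi * I * (1 + 6 * s)) *
      jacobiTheta₂ (1 / 2 - 6 * s) (18 * s) := by
    rw [show (3 / 2 + 12 * s : ℂ) = (1 / 2 - 6 * s + 18 * s) + 1 by ring,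
      jacobiTheta₂_add_left, jacobiTheta₂_add_left']
    congr 3; ring
  have x1 : cexp (2 * Real.pi * I * (1 / 2) + Real.pi * I * 2 * s) = -r := by
    rw [show 2 * Real.pi * I * (1 / 2) + Real.pi * I * 2 * s =
      Real.pi * I + 2 * Real.pi * I * s by ring, Complex.exp_add, ← hr, Complex.exp_pi_mul_I,
      neg_one_mul]
  have x2 : cexp (4 * Real.pi * I * (1 / 2) + 4 * Real.pi * I * 2 * s) *
      cexp (-Real.pi * I * (1 + 6 * s)) = -r := by
    rw [← x1, ← Complex.exp_add]
    congr 1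
    ring
  rw [ht, e0, e1, e2, ← mul_assoc, x1, x2]
  ring

lemma qPochInf_half_period_trisection (hs : 0 < s.im) (hr : r = cexp (2 * Real.pi * I * s)) :
    qPochInf (r ^ 2) (r ^ 2) ^ 2 / qPochInf r r =
      qPochInf (r ^ 6) (r ^ 6) * qPochInf (r ^ 9) (r ^ 9) ^ 2 /
        (qPochInf (r ^ 3) (r ^ 3) * qPochInf (r ^ 18) (r ^ 18)) +
      r * (qPochInf (r ^ 18) (r ^ 18) ^ 2 / qPochInf (r ^ 9) (r ^ 9)) := by
  have h9 := jacobiTheta₂_half_period (natCast_mul_im_pos hs (n := 9) (by simp))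
    (pow_eq_cexp hr 9)
  have h3 := jacobiTheta₂_neg_half_three (natCast_mul_im_pos hs three_ne_zero) (pow_eq_cexp hr 3)
  have h1 := jacobiTheta₂_half_period hs hr
  have ht := jacobiTheta₂_trisection (-s / 2) hs
  simp only [← pow_mul] at h9 h3
  norm_num only [Nat.cast_ofNat, ← mul_assoc] at h9 h3 ht
  have e1 : jacobiTheta₂ (3 * (-s / 2) + 3 * s) (9 * s) = jacobiTheta₂ (-(3 * s) / 2) (9 * s) := by
    rw [← jacobiTheta₂_neg_left]
    congr 1
    ring
  have e2 : jacobiTheta₂ (3 * (-s / 2) + 6 * s) (9 * s) = jacobiTheta₂ (-(9 * s) / 2) (9 * s) := by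
    rw [← jacobiTheta₂_neg_left]
    congr 1
    ring
  rw [e1, e2, show 3 * (-s / 2) = -(3 * s) / 2 by ring, h9, h3, h1,
    show 2 * Real.pi * I * (-s / 2) + Real.pi * I * s = 0 by ring,
    show 4 * Real.pi * I * (-s / 2) + 4 * Real.pi * I * s = 2 * Real.pi * I * s by ring,
    ← hr, Complex.exp_zero] at ht
  linear_combination (1 / 2) * ht

end Evaluation

section CubicRatio

/-- The eta-quotient `(q; q) (q⁶; q⁶)³ / ((q²; q²) (q³; q³)³)`, which is `q ^ (-1 / 3)` times the
cubic continued fraction. -/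
noncomputable def cubicRatio (q : ℂ) : ℂ :=
  qPochInf q q * qPochInf (q ^ 6) (q ^ 6) ^ 3 /
    (qPochInf (q ^ 2) (q ^ 2) * qPochInf (q ^ 3) (q ^ 3) ^ 3)

lemma c_eq_cubicRatio {τ : ℂ} (hτ : 0 < τ.im) :
    c τ = cexp (2 * Real.pi * I * τ / 3) * cubicRatio (nome τ) := by
  have hq : ‖nome τ‖ < 1 := norm_cexp_two_pi_lt_one hτ
  unfold c
  generalize nome τ = q at hq ⊢
  have hq6 := norm_pow_lt_one hq (n := 6) (by simp)
  have hq3 := norm_pow_lt_one hq three_ne_zero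
  have h3 := qPochInf_ne_zero hq6 hq3
  have hE2 := qPochInf_pow_self_ne_zero hq two_ne_zero
  have hE3 := qPochInf_pow_self_ne_zero hq three_ne_zero
  have hE6 := qPochInf_pow_self_ne_zero hq (n := 6) (by simp)
  have h := ((hasProd_qPochInf hq6 (q ^ 5)).mul (hasProd_qPochInf hq6 q)).div₀
    ((hasProd_qPochInf hq6 (q ^ 3)).mul (hasProd_qPochInf hq6 (q ^ 3))) (mul_ne_zero h3 h3)
  have h15 := qPochInf_one_mul_five hq
  rw [tprod_congr (g := fun n ↦ (1 - q ^ 5 * (q ^ 6) ^ n) * (1 - q * (q ^ 6) ^ n) /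
    ((1 - q ^ 3 * (q ^ 6) ^ n) * (1 - q ^ 3 * (q ^ 6) ^ n))) fun n ↦ ?_, h.tprod_eq]
  · congr 1
    rw [cubicRatio, div_eq_div_iff (mul_ne_zero h3 h3) (mul_ne_zero hE2 (pow_ne_zero 3 hE3))]
    rw [qPochInf_cube_eq_two hq] at h15 ⊢
    linear_combination (qPochInf (q ^ 3) (q ^ 6) * qPochInf (q ^ 6) (q ^ 6)) ^ 2 * h15
  · rw [show 6 * (n + 1) - 1 = 5 + 6 * n by lia, show 6 * (n + 1) - 5 = 1 + 6 * n by lia,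
      show 6 * (n + 1) - 3 = 3 + 6 * n by lia]
    simp only [pow_add, pow_mul, pow_one]
    rw [sq (1 - q ^ 3 * _)]

variable {s r q : ℂ}

lemma qPochInf_half_trisection_cubicRatio (hs : 0 < s.im) (hr : r = cexp (2 * Real.pi * I * s))
    (hq : r ^ 3 = q) :
    qPochInf r r ^ 2 / qPochInf (r ^ 2) (r ^ 2) =
      qPochInf (q ^ 3) (q ^ 3) ^ 2 / qPochInf (q ^ 6) (q ^ 6) * (1 - 2 * (r * cubicRatio q)) := by
  have hr1 : ‖r‖ < 1 := hr ▸ norm_cexp_two_pi_lt_one hs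
  have hq1 : ‖q‖ < 1 := hq ▸ norm_pow_lt_one hr1 three_ne_zero
  have hE2 := qPochInf_pow_self_ne_zero hq1 two_ne_zero
  have hE3 := qPochInf_pow_self_ne_zero hq1 three_ne_zero
  have hE6 := qPochInf_pow_self_ne_zero hq1 (n := 6) (by simp)
  have h15 := qPochInf_one_mul_five hq1
  rw [← eq_div_iff (mul_ne_zero hE2 hE3)] at h15
  rw [qPochInf_half_trisection hs hr, show r ^ 9 = q ^ 3 by rw [← hq]; ring,
    show r ^ 18 = q ^ 6 by rw [← hq]; ring, show r ^ 15 = q ^ 5 by rw [← hq]; ring, hq, h15,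
    cubicRatio]
  field_simp

lemma qPochInf_half_period_trisection_cubicRatio (hs : 0 < s.im)
    (hr : r = cexp (2 * Real.pi * I * s)) (hq : r ^ 3 = q) :
    cubicRatio q * (qPochInf (r ^ 2) (r ^ 2) ^ 2 / qPochInf r r) =
      qPochInf (q ^ 6) (q ^ 6) ^ 2 / qPochInf (q ^ 3) (q ^ 3) * (1 + r * cubicRatio q) := by
  have hr1 : ‖r‖ < 1 := hr ▸ norm_cexp_two_pi_lt_one hs
  have hq1 : ‖q‖ < 1 := hq ▸ norm_pow_lt_one hr1 three_ne_zero
  have hE1 := qPochInf_ne_zero hq1 hq1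
  have hE2 := qPochInf_pow_self_ne_zero hq1 two_ne_zero
  have hE3 := qPochInf_pow_self_ne_zero hq1 three_ne_zero
  have hE6 := qPochInf_pow_self_ne_zero hq1 (n := 6) (by simp)
  rw [qPochInf_half_period_trisection hs hr, show r ^ 9 = q ^ 3 by rw [← hq]; ring,
    show r ^ 18 = q ^ 6 by rw [← hq]; ring, show r ^ 6 = q ^ 2 by rw [← hq]; ring, hq,
    cubicRatio]
  field_simp

lemma qPochInf_self_mul_of_root (hr : ‖r‖ < 1) (hq : r ^ 3 = q) {ω : ℂ}
    (hω : 1 + ω + ω ^ 2 = 0) :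
    qPochInf r r * qPochInf (ω * r) (ω * r) * qPochInf (ω ^ 2 * r) (ω ^ 2 * r) =
      qPochInf q q ^ 4 / qPochInf (q ^ 3) (q ^ 3) := by
  have hq1 : ‖q‖ < 1 := hq ▸ norm_pow_lt_one hr three_ne_zero
  have hω3 : ω ^ 3 = 1 := by linear_combination (ω - 1) * hω
  have hω1 : ‖ω‖ = 1 := norm_eq_one_of_pow_eq_one hω3 three_ne_zero
  have hω' : 1 + ω ^ 2 + (ω ^ 2) ^ 2 = 0 := by linear_combination hω + ω * hω3
  have h0 := qPochInf_self_eq_three hr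
  have h1 := qPochInf_self_eq_three (r := ω * r) (by simpa [hω1] using hr)
  have h2 := qPochInf_self_eq_three (r := ω ^ 2 * r) (by simpa [hω1] using hr)
  rw [show (ω * r) ^ 3 = q by rw [mul_pow, hω3, one_mul, hq], mul_pow] at h1
  rw [show (ω ^ 2 * r) ^ 3 = q by rw [mul_pow, pow_right_comm, hω3, one_pow, one_mul, hq],
    mul_pow] at h2
  rw [hq] at h0
  have p1 := qPochInf_mul_mul_of_root hq1 r hω
  have p2 := qPochInf_mul_mul_of_root hq1 (r ^ 2) hω'
  have h := qPochInf_self_eq_three hq1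
  rw [hq] at p1
  rw [pow_right_comm r 2 3, hq] at p2
  rw [eq_div_iff (qPochInf_pow_self_ne_zero hq1 three_ne_zero), h0, h1, h2]
  linear_combination qPochInf q q ^ 3 * qPochInf (q ^ 3) (q ^ 3) *
    (qPochInf (r ^ 2) q * qPochInf (ω ^ 2 * r ^ 2) q * qPochInf ((ω ^ 2) ^ 2 * r ^ 2) q * p1 +
      qPochInf q (q ^ 3) * p2) - qPochInf q q ^ 3 * h

lemma one_add_cexp_third_add_sq :
    1 + cexp (2 * Real.pi * I / 3) + cexp (2 * Real.pi * I / 3) ^ 2 = 0 := by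
  have h := (Complex.isPrimitiveRoot_exp 3 three_ne_zero).geom_sum_eq_zero (by norm_num)
  simpa [Finset.sum_range_succ] using h

lemma cexp_third_pow_mul (s : ℂ) (k : ℕ) :
    cexp (2 * Real.pi * I / 3) ^ k * cexp (2 * Real.pi * I * s) =
      cexp (2 * Real.pi * I * (s + k / 3)) := by
  rw [← Complex.exp_nat_mul, ← Complex.exp_add]
  ring_nf

lemma add_natCast_div_three_im_pos (hs : 0 < s.im) (k : ℕ) : 0 < (s + k / 3).im := by
  have : ((k : ℂ) / 3).im = 0 := by simp
  rwa [Complex.add_im, this, add_zero]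

lemma nome_natCast_mul (τ : ℂ) (n : ℕ) : nome τ ^ n = nome (n * τ) := pow_eq_cexp rfl n

lemma one_sub_mul_mul_of_root {ω : ℂ} (hω : 1 + ω + ω ^ 2 = 0) (u : ℂ) :
    (1 - u) * (1 - ω * u) * (1 - ω ^ 2 * u) = 1 - u ^ 3 := by
  linear_combination (-u + ω * u ^ 2 - (ω - 1) * u ^ 3) * hω

lemma qPochInf_half_pow_four (hs : 0 < s.im) (hr : r = cexp (2 * Real.pi * I * s))
    (hq : r ^ 3 = q) :
    (qPochInf q q ^ 2 / qPochInf (q ^ 2) (q ^ 2)) ^ 4 =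
      (qPochInf (q ^ 3) (q ^ 3) ^ 2 / qPochInf (q ^ 6) (q ^ 6)) ^ 4 *
        (1 - 8 * (r * cubicRatio q) ^ 3) := by
  have hr1 : ‖r‖ < 1 := hr ▸ norm_cexp_two_pi_lt_one hs
  have hq1 : ‖q‖ < 1 := hq ▸ norm_pow_lt_one hr1 three_ne_zero
  have hE1 := qPochInf_ne_zero hq1 hq1
  have hE2 := qPochInf_pow_self_ne_zero hq1 two_ne_zero
  have hE3 := qPochInf_pow_self_ne_zero hq1 three_ne_zero
  have hE6 := qPochInf_pow_self_ne_zero hq1 (n := 6) (by simp)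
  have hω := one_add_cexp_third_add_sq
  have hd (k : ℕ) := qPochInf_half_trisection_cubicRatio (q := q)
    (add_natCast_div_three_im_pos hs k) (cexp_third_pow_mul s k)
  rw [← hr] at hd
  generalize cexp (2 * Real.pi * I / 3) = ω at hω hd
  have hω3 : ω ^ 3 = 1 := by linear_combination (ω - 1) * hω
  replace hd (k : ℕ) := hd k (by rw [mul_pow, pow_right_comm, hω3, one_pow, one_mul, hq])
  have h0 := hd 0
  have h1 := hd 1
  have h2 := hd 2
  have p1 := qPochInf_self_mul_of_root hr1 hq hω
  have p2 := qPochInf_self_mul_of_root (r := r ^ 2) (q := q ^ 2) (ω := ω ^ 2)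
    (norm_pow_lt_one hr1 two_ne_zero) (by rw [← hq]; ring)
    (by linear_combination hω + ω * hω3)
  simp only [pow_zero, one_mul, pow_one, mul_pow] at h0 h1 h2
  rw [← pow_mul q] at p2
  have hp : (qPochInf r r * qPochInf (ω * r) (ω * r) * qPochInf (ω ^ 2 * r) (ω ^ 2 * r)) ^ 2 /
      (qPochInf (r ^ 2) (r ^ 2) * qPochInf (ω ^ 2 * r ^ 2) (ω ^ 2 * r ^ 2) *
        qPochInf ((ω ^ 2) ^ 2 * r ^ 2) ((ω ^ 2) ^ 2 * r ^ 2)) =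
      (qPochInf (q ^ 3) (q ^ 3) ^ 2 / qPochInf (q ^ 6) (q ^ 6)) ^ 3 *
        (1 - 8 * (r * cubicRatio q) ^ 3) := by
    rw [mul_pow, mul_pow, mul_div_mul_comm, mul_div_mul_comm, h0, h1, h2]
    linear_combination (qPochInf (q ^ 3) (q ^ 3) ^ 2 / qPochInf (q ^ 6) (q ^ 6)) ^ 3 *
      one_sub_mul_mul_of_root hω (2 * (r * cubicRatio q))
  rw [p1, p2] at hp
  norm_num only at hp
  rw [pow_succ (qPochInf (q ^ 3) (q ^ 3) ^ 2 / _) 3, mul_right_comm, ← hp]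
  field_simp

lemma qPochInf_half_period_pow_four (hs : 0 < s.im) (hr : r = cexp (2 * Real.pi * I * s))
    (hq : r ^ 3 = q) :
    cubicRatio q ^ 3 * (qPochInf (q ^ 2) (q ^ 2) ^ 2 / qPochInf q q) ^ 4 =
      (qPochInf (q ^ 6) (q ^ 6) ^ 2 / qPochInf (q ^ 3) (q ^ 3)) ^ 4 *
        (1 + (r * cubicRatio q) ^ 3) := by
  have hr1 : ‖r‖ < 1 := hr ▸ norm_cexp_two_pi_lt_one hs
  have hq1 : ‖q‖ < 1 := hq ▸ norm_pow_lt_one hr1 three_ne_zero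
  have hE1 := qPochInf_ne_zero hq1 hq1
  have hE2 := qPochInf_pow_self_ne_zero hq1 two_ne_zero
  have hE3 := qPochInf_pow_self_ne_zero hq1 three_ne_zero
  have hE6 := qPochInf_pow_self_ne_zero hq1 (n := 6) (by simp)
  have hω := one_add_cexp_third_add_sq
  have hd (k : ℕ) := qPochInf_half_period_trisection_cubicRatio (q := q)
    (add_natCast_div_three_im_pos hs k) (cexp_third_pow_mul s k)
  rw [← hr] at hd
  generalize cexp (2 * Real.pi * I / 3) = ω at hω hd
  have hω3 : ω ^ 3 = 1 := by linear_combination (ω - 1) * hω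
  replace hd (k : ℕ) := hd k (by rw [mul_pow, pow_right_comm, hω3, one_pow, one_mul, hq])
  have h0 := hd 0
  have h1 := hd 1
  have h2 := hd 2
  have p1 := qPochInf_self_mul_of_root hr1 hq hω
  have p2 := qPochInf_self_mul_of_root (r := r ^ 2) (q := q ^ 2) (ω := ω ^ 2)
    (norm_pow_lt_one hr1 two_ne_zero) (by rw [← hq]; ring)
    (by linear_combination hω + ω * hω3)
  simp only [pow_zero, one_mul, pow_one, mul_pow] at h0 h1 h2
  rw [← pow_mul q] at p2
  have hp : cubicRatio q ^ 3 * ((qPochInf (r ^ 2) (r ^ 2) * qPochInf (ω ^ 2 * r ^ 2) (ω ^ 2 * r ^ 2) *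
        qPochInf ((ω ^ 2) ^ 2 * r ^ 2) ((ω ^ 2) ^ 2 * r ^ 2)) ^ 2 /
      (qPochInf r r * qPochInf (ω * r) (ω * r) * qPochInf (ω ^ 2 * r) (ω ^ 2 * r))) =
      (qPochInf (q ^ 6) (q ^ 6) ^ 2 / qPochInf (q ^ 3) (q ^ 3)) ^ 3 *
        (1 + (r * cubicRatio q) ^ 3) := by
    rw [mul_pow, mul_pow, mul_div_mul_comm, mul_div_mul_comm, pow_succ, sq, mul_mul_mul_comm,
      mul_mul_mul_comm (cubicRatio q) (cubicRatio q), h0, h1, h2]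
    linear_combination (qPochInf (q ^ 6) (q ^ 6) ^ 2 / qPochInf (q ^ 3) (q ^ 3)) ^ 3 *
      one_sub_mul_mul_of_root hω (-(r * cubicRatio q))
  rw [p1, p2] at hp
  norm_num only at hp
  rw [pow_succ (qPochInf (q ^ 6) (q ^ 6) ^ 2 / _) 3, mul_right_comm, ← hp]
  field_simp

end CubicRatio

section Inversion

variable {τ : ℂ}

lemma c_cube (hτ : 0 < τ.im) : c τ ^ 3 = nome τ * cubicRatio (nome τ) ^ 3 := by
  rw [c_eq_cubicRatio hτ, mul_pow, ← Complex.exp_nat_mul, nome]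
  congr 2
  push_cast
  ring

lemma jacobiTheta₂_half_pow_four (hτ : 0 < τ.im) :
    jacobiTheta₂ (1 / 2) (2 * τ) ^ 4 =
      jacobiTheta₂ (1 / 2) (6 * τ) ^ 4 * (1 - 8 * c τ ^ 3) := by
  have h3 := jacobiTheta₂_half (natCast_mul_im_pos hτ three_ne_zero) (nome_natCast_mul τ 3)
  have hs : 0 < (τ / 3).im := by simpa using hτ
  have hr : cexp (2 * Real.pi * I * (τ / 3)) ^ 3 = nome τ := by
    rw [← Complex.exp_nat_mul, nome]
    push_cast
    ring_nf
  rw [← pow_mul, ← mul_assoc] at h3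
  norm_num only [Nat.cast_ofNat] at h3
  have h := qPochInf_half_pow_four hs rfl hr
  rw [← h3, ← jacobiTheta₂_half (r := nome τ) hτ rfl] at h
  rw [h, c_eq_cubicRatio hτ, mul_div_assoc]

lemma c_cube_mul_jacobiTheta₂_pow_four (hτ : 0 < τ.im) :
    c τ ^ 3 * jacobiTheta₂ (-τ / 2) τ ^ 4 =
      nome τ * (jacobiTheta₂ (-(3 * τ) / 2) (3 * τ) ^ 4 * (1 + c τ ^ 3)) := by
  have h3 := jacobiTheta₂_half_period (natCast_mul_im_pos hτ three_ne_zero) (nome_natCast_mul τ 3)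
  have hs : 0 < (τ / 3).im := by simpa using hτ
  have hr : cexp (2 * Real.pi * I * (τ / 3)) ^ 3 = nome τ := by
    rw [← Complex.exp_nat_mul, nome]
    push_cast
    ring_nf
  rw [← pow_mul] at h3
  norm_num only [Nat.cast_ofNat] at h3
  have h := qPochInf_half_period_pow_four hs rfl hr
  rw [mul_pow, hr, ← c_cube hτ] at h
  rw [h3, jacobiTheta₂_half_period (r := nome τ) hτ rfl, mul_div_assoc, mul_div_assoc, mul_pow, mul_pow]
  rw [c_cube hτ] at h ⊢
  linear_combination 2 ^ 4 * nome τ * h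

lemma jacobiTheta₂_half_neg_inv_pow_four (hτ : τ ≠ 0) :
    jacobiTheta₂ (1 / 2) (-1 / τ) ^ 4 =
      -τ ^ 2 * cexp (Real.pi * I * τ) * jacobiTheta₂ (-τ / 2) τ ^ 4 := by
  rw [jacobiTheta₂_functional_equation, mul_pow, mul_pow, div_pow,
    show (1 / 2 : ℂ) / (-1 / τ) = -τ / 2 by field_simp, show -1 / (-1 / τ) = τ by field_simp,
    show (-I * (-1 / τ)) = I / τ by ring, ← Complex.cpow_nat_mul, ← Complex.exp_nat_mul,
    show ((4 : ℕ) : ℂ) * (1 / 2) = (2 : ℕ) by norm_num, Complex.cpow_natCast, div_pow,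
    Complex.I_sq]
  congr 2
  · field_simp
  · congr 1
    push_cast
    field_simp
    norm_num

lemma jacobiTheta₂_half_period_ne_zero (hτ : 0 < τ.im) : jacobiTheta₂ (-τ / 2) τ ≠ 0 := by
  have hq : ‖nome τ‖ < 1 := norm_cexp_two_pi_lt_one hτ
  rw [jacobiTheta₂_half_period (r := nome τ) hτ rfl]
  exact div_ne_zero (mul_ne_zero two_ne_zero
    (pow_ne_zero 2 (qPochInf_pow_self_ne_zero hq two_ne_zero))) (qPochInf_ne_zero hq hq)

lemma nine_mul_jacobiTheta₂_pow_four (hτ : 0 < τ.im) :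
    9 * nome τ * jacobiTheta₂ (-(3 * τ) / 2) (3 * τ) ^ 4 =
      jacobiTheta₂ (-τ / 2) τ ^ 4 * (1 - 8 * c (-1 / (6 * τ)) ^ 3) := by
  have hτ0 : τ ≠ 0 := by
    rintro rfl
    simp at hτ
  have h6 : 0 < (-1 / (6 * τ)).im := by
    rw [neg_div, one_div, Complex.neg_im, Complex.inv_im, neg_div, neg_neg]
    exact div_pos (natCast_mul_im_pos hτ (n := 6) (by simp))
      (Complex.normSq_pos.mpr (mul_ne_zero (by simp) hτ0))
  have h := jacobiTheta₂_half_pow_four h6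
  rw [show 2 * (-1 / (6 * τ)) = -1 / (3 * τ) by field_simp; norm_num,
    show 6 * (-1 / (6 * τ)) = -1 / τ by field_simp,
    jacobiTheta₂_half_neg_inv_pow_four hτ0,
    jacobiTheta₂_half_neg_inv_pow_four (mul_ne_zero three_ne_zero hτ0),
    show Real.pi * I * (3 * τ) = Real.pi * I * τ + 2 * Real.pi * I * τ by ring,
    Complex.exp_add, ← nome] at h
  have h0 : -τ ^ 2 * cexp (Real.pi * I * τ) ≠ 0 :=
    mul_ne_zero (neg_ne_zero.mpr (pow_ne_zero 2 hτ0)) (Complex.exp_ne_zero _)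
  refine mul_left_cancel₀ h0 ?_
  linear_combination h

end Inversion

/-- For `τ` in the upper half-plane, `(1 + c(τ)³)·c(−1/(6τ))³ = 1/8 − c(τ)³`. -/
theorem cubicCF_cube_inversion (τ : ℂ) (hτ : 0 < τ.im) :
    (1 + c τ ^ 3) * c (-1 / (6 * τ)) ^ 3 = 1 / 8 - c τ ^ 3 := by
  refine mul_left_cancel₀ (pow_ne_zero 4 (jacobiTheta₂_half_period_ne_zero hτ)) ?_
  linear_combination 9 / 8 * c_cube_mul_jacobiTheta₂_pow_four hτ +
    (1 + c τ ^ 3) / 8 * nine_mul_jacobiTheta₂_pow_four hτ
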